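/- If Ŝ is a Neumann subgroup of M̂ = PGL(2,ℤ) not contained in M = PSL(2,ℤ) and Ŝ has (k,l,m)-structure for k, l, m ∈ ℕ ∪ {∞}, then k + l + m = ∞ and m ≥ 1. -/

import Mathlib

open Matrix Pointwise

noncomputable section

abbrev GL2Z := Matrix.GeneralLinearGroup (Fin 2) ℤ

/-- The subgroup {±I} of GL(2,ℤ), which is its center. -/
def pmI : Subgroup GL2Z := Subgroup.zpowers (-1)

instance pmI_normal : pmI.Normal := by
  constructor
  rintro n hn g
  obtain ⟨k, hk⟩ := Subgroup.mem_zpowers_iff.mp hn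
  have hc : Commute ((-1 : GL2Z) ^ k) g := (Commute.neg_one_left g).zpow_left k
  have : g * n * g⁻¹ = n := by
    rw [← hk, ← hc.eq]; group
  rw [this]; exact hn

/-- The extended modular group PGL(2,ℤ) = GL(2,ℤ)/{±I}. -/
abbrev Mhat := GL2Z ⧸ pmI

def pr : GL2Z →* Mhat := QuotientGroup.mk' pmI

def tauGL : GL2Z := ⟨!![1,1;0,1], !![1,-1;0,1], by decide, by decide⟩
def nuGL : GL2Z := ⟨!![-1,0;0,1], !![-1,0;0,1], by decide, by decide⟩
def omegaGL : GL2Z := ⟨!![0,-1;1,0], !![0,1;-1,0], by decide, by decide⟩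
def phiGL : GL2Z := ⟨!![0,-1;1,1], !![1,1;-1,0], by decide, by decide⟩

/-- τ, the class of [[1,1],[0,1]]. -/
def tau : Mhat := pr tauGL
/-- ν, the class of [[-1,0],[0,1]]. -/
def nu : Mhat := pr nuGL
/-- ω, the class of [[0,-1],[1,0]]. -/
def omega : Mhat := pr omegaGL
/-- φ, the class of [[0,-1],[1,1]]. -/
def phi : Mhat := pr phiGL

/-- T̂ = ⟨τ, ν⟩, the stabilizer of ∞. -/
def That : Subgroup Mhat := Subgroup.closure {tau, nu}

/-- A Neumann subgroup of the extended modular group: a complement of T̂. -/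
def IsNeumann (S : Subgroup Mhat) : Prop :=
  (S : Set Mhat) * (That : Set Mhat) = Set.univ ∧ S ⊓ That = ⊥

/-- The modular group PSL(2,ℤ), as the subgroup of PGL(2,ℤ) of classes of
matrices of determinant one. -/
def Msub : Subgroup Mhat :=
  Subgroup.map pr (MonoidHom.ker (Matrix.GeneralLinearGroup.det))

/-- `G` is a free product of `k` groups of order 2, `l` groups of order 3 and
`m` infinite cyclic groups (cardinalities measured in `ℕ∞`). -/
def HasKLMStructure (G : Type) [Group G] (k l m : ℕ∞) : Prop :=
  ∃ (ι : Type) (H : ι → Type) (inst : ∀ i, Group (H i)),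
    letI := inst
    Nonempty (G ≃* Monoid.CoprodI H) ∧
    (∀ i, Nonempty (H i ≃* Multiplicative (ZMod 2)) ∨
      Nonempty (H i ≃* Multiplicative (ZMod 3)) ∨
      Nonempty (H i ≃* Multiplicative ℤ)) ∧
    {i | Nonempty (H i ≃* Multiplicative (ZMod 2))}.encard = k ∧
    {i | Nonempty (H i ≃* Multiplicative (ZMod 3))}.encard = l ∧
    {i | Nonempty (H i ≃* Multiplicative ℤ)}.encard = m


/-! ### Basic facts on entries -/

lemma ent_mul (g h : GL2Z) (i j : Fin 2) :
    (g * h).1 i j = g.1 i 0 * h.1 0 j + g.1 i 1 * h.1 1 j := by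
  rw [Units.val_mul, Matrix.mul_apply, Fin.sum_univ_two]

lemma ent_neg (g : GL2Z) (i j : Fin 2) : (-g).1 i j = - g.1 i j := by
  rw [Units.val_neg, Matrix.neg_apply]

lemma gl_ext {g h : GL2Z} (h00 : g.1 0 0 = h.1 0 0) (h01 : g.1 0 1 = h.1 0 1)
    (h10 : g.1 1 0 = h.1 1 0) (h11 : g.1 1 1 = h.1 1 1) : g = h := by
  apply Units.ext
  ext i j
  fin_cases i <;> fin_cases j <;> assumption

lemma det_val (g : GL2Z) : (Matrix.GeneralLinearGroup.det g : ℤ)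
    = g.1 0 0 * g.1 1 1 - g.1 0 1 * g.1 1 0 := by
  rw [Matrix.GeneralLinearGroup.val_det_apply, Matrix.det_fin_two]

lemma det_pm (g : GL2Z) : g.1 0 0 * g.1 1 1 - g.1 0 1 * g.1 1 0 = 1 ∨
    g.1 0 0 * g.1 1 1 - g.1 0 1 * g.1 1 0 = -1 := by
  rw [← det_val]
  exact Int.isUnit_iff.mp (Units.isUnit _)

lemma mem_pmI (g : GL2Z) : g ∈ pmI ↔ g = 1 ∨ g = -1 := by
  unfold pmI
  rw [Subgroup.mem_zpowers_iff]
  constructor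
  · rintro ⟨k, rfl⟩
    rcases Int.even_or_odd k with h | h
    · left; exact h.neg_one_zpow
    · right; exact h.neg_one_zpow
  · rintro (rfl | rfl)
    · exact ⟨0, by simp⟩
    · exact ⟨1, by simp⟩

lemma pr_eq_one (g : GL2Z) : pr g = 1 ↔ g = 1 ∨ g = -1 := by
  rw [← mem_pmI]
  exact QuotientGroup.eq_one_iff g

lemma pr_eq (g h : GL2Z) : pr g = pr h ↔ g = h ∨ g = -h := by
  have : pr g = pr h ↔ pr (h⁻¹ * g) = 1 := by
    rw [map_mul, map_inv, inv_mul_eq_one, eq_comm]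
  rw [this, pr_eq_one, inv_mul_eq_iff_eq_mul, inv_mul_eq_iff_eq_mul]
  simp

lemma pr_neg (g : GL2Z) : pr (-g) = pr g := (pr_eq _ _).2 (Or.inr rfl)

lemma pr_surj (x : Mhat) : ∃ g, pr g = x := QuotientGroup.mk'_surjective pmI x

/-! ### The stabilizer of infinity -/

lemma ut_inv {g : GL2Z} (h : g.1 1 0 = 0) : (g⁻¹).1 1 0 = 0 := by
  have h1 : (g * g⁻¹).1 1 0 = 0 := by simp
  rw [ent_mul, h] at h1
  rcases det_pm g with hd | hd <;> rw [h] at hd <;>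
  · have : g.1 1 1 ≠ 0 := by rintro h0; rw [h0] at hd; simp at hd
    simpa [this] using h1

lemma ut_mul {g h : GL2Z} (hg : g.1 1 0 = 0) (hh : h.1 1 0 = 0) : (g * h).1 1 0 = 0 := by
  rw [ent_mul, hg, hh]; simp

lemma tau_pow_ent (n : ℕ) : (tauGL ^ n).1 0 0 = 1 ∧ (tauGL ^ n).1 0 1 = n ∧
    (tauGL ^ n).1 1 0 = 0 ∧ (tauGL ^ n).1 1 1 = 1 := by
  induction n with
  | zero => simp
  | succ n ih =>
    obtain ⟨h1, h2, h3, h4⟩ := ih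
    simp only [pow_succ, ent_mul, h1, h2, h3, h4]
    simp [tauGL]; ring

lemma tau_mem : tau ∈ That := Subgroup.subset_closure (by simp)
lemma nu_mem : nu ∈ That := Subgroup.subset_closure (by simp)

lemma That_ut {g : GL2Z} (hg : pr g ∈ That) : g.1 1 0 = 0 := by
  have key : ∀ x ∈ That, ∀ g, pr g = x → g.1 1 0 = 0 := by
    intro x hx
    induction hx using Subgroup.closure_induction with
    | mem x hx =>
      intro g hg
      rcases hx with rfl | hx
      · rcases (pr_eq g tauGL).1 hg with rfl | rfl
        · simp [tauGL]
        · rw [ent_neg]; simp [tauGL]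
      · rw [Set.mem_singleton_iff] at hx
        subst hx
        rcases (pr_eq g nuGL).1 hg with rfl | rfl
        · simp [nuGL]
        · rw [ent_neg]; simp [nuGL]
    | one =>
      intro g hg
      rcases (pr_eq_one g).1 hg with rfl | rfl
      · simp
      · rw [ent_neg]; simp
    | mul x y _ _ hx hy =>
      intro g hg
      obtain ⟨a, ha⟩ := pr_surj x
      have : g = a * (a⁻¹ * g) := by group
      rw [this]
      refine ut_mul (hx a ha) (hy _ ?_)
      rw [map_mul, hg, map_inv, ha]; group
    | inv x _ hx =>
      intro g hg
      have := ut_inv (hx g⁻¹ (by rw [map_inv, hg, inv_inv]))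
      simpa using this
  exact key _ hg g rfl

lemma ut_diag {g : GL2Z} (h : g.1 1 0 = 0) :
    (g.1 0 0 = 1 ∨ g.1 0 0 = -1) ∧ (g.1 1 1 = 1 ∨ g.1 1 1 = -1) := by
  have hd := det_pm g
  rw [h, mul_zero, sub_zero] at hd
  rw [← Int.isUnit_iff, ← Int.isUnit_iff, ← IsUnit.mul_iff, Int.isUnit_iff]
  exact hd

lemma shear_mem {g : GL2Z} (h00 : g.1 0 0 = 1) (h10 : g.1 1 0 = 0) (h11 : g.1 1 1 = 1) :
    pr g ∈ That := by
  rcases Int.natAbs_eq (g.1 0 1) with hb | hb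
  · have : g = tauGL ^ (g.1 0 1).natAbs := by
      obtain ⟨h1, h2, h3, h4⟩ := tau_pow_ent (g.1 0 1).natAbs
      apply gl_ext <;> simp only [h1, h2, h3, h4, h00, h10, h11]
      exact hb
    rw [this, map_pow]
    exact Subgroup.pow_mem _ tau_mem _
  · have : g * tauGL ^ (g.1 0 1).natAbs = 1 := by
      obtain ⟨h1, h2, h3, h4⟩ := tau_pow_ent (g.1 0 1).natAbs
      apply gl_ext <;> simp only [ent_mul, h1, h2, h3, h4, h00, h10, h11] <;>
        norm_num only [Units.val_one, Matrix.one_apply] <;> simp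
      rw [← Int.natCast_natAbs]; omega
    rw [eq_inv_of_mul_eq_one_left this, map_inv, map_pow]
    exact Subgroup.inv_mem _ (Subgroup.pow_mem _ tau_mem _)

lemma ut_That {g : GL2Z} (h : g.1 1 0 = 0) : pr g ∈ That := by
  have step : ∀ g : GL2Z, g.1 1 0 = 0 → g.1 1 1 = 1 → pr g ∈ That := by
    intro g h h11
    rcases (ut_diag h).1 with h00 | h00
    · exact shear_mem h00 h h11
    · have : pr (g * nuGL) ∈ That := by
        apply shear_mem <;> rw [ent_mul] <;> simp [nuGL, h00, h, h11]
      rw [map_mul] at this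
      exact (Subgroup.mul_mem_cancel_right _ nu_mem).1 this
  rcases (ut_diag h).2 with h11 | h11
  · exact step g h h11
  · rw [← pr_neg]
    apply step
    · rw [ent_neg, h]; simp
    · rw [ent_neg, h11]; simp

/-! ### Consequences of the Neumann property -/

lemma neu_trans {S : Subgroup Mhat} (h : IsNeumann S) (A : GL2Z) :
    ∃ s t : GL2Z, pr s ∈ S ∧ t.1 1 0 = 0 ∧ A = s * t := by
  have : pr A ∈ (S : Set Mhat) * (That : Set Mhat) := by rw [h.1]; trivial
  obtain ⟨x, hx, y, hy, hxy⟩ := this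
  obtain ⟨s, rfl⟩ := pr_surj x
  refine ⟨s, s⁻¹ * A, hx, That_ut ?_, by group⟩
  have : pr (s⁻¹ * A) = y := by rw [map_mul, ← hxy, map_inv]; group
  rw [this]; exact hy

lemma neu_free {S : Subgroup Mhat} (h : IsNeumann S) {s : GL2Z} (hs : pr s ∈ S)
    (h0 : s.1 1 0 = 0) : pr s = 1 := by
  have : pr s ∈ S ⊓ That := ⟨hs, ut_That h0⟩
  rwa [h.2, Subgroup.mem_bot] at this

lemma neu_free' {S : Subgroup Mhat} (h : IsNeumann S) {s A : GL2Z} (hs : pr s ∈ S)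
    (h0 : (A⁻¹ * s * A).1 1 0 = 0) : pr s = 1 := by
  obtain ⟨r, t, hr, ht, rfl⟩ := neu_trans h A
  have e : r⁻¹ * s * r = t * ((r * t)⁻¹ * s * (r * t)) * t⁻¹ := by group
  have h1 : (r⁻¹ * s * r).1 1 0 = 0 := by
    rw [e]; exact ut_mul (ut_mul ht h0) (ut_inv ht)
  have h2 : pr (r⁻¹ * s * r) = 1 := by
    apply neu_free h _ h1
    rw [map_mul, map_mul, map_inv]
    exact S.mul_mem (S.mul_mem (S.inv_mem hr) hs) hr
  rw [map_mul, map_mul, map_inv] at h2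
  have : pr s = pr r * ((pr r)⁻¹ * pr s * pr r) * (pr r)⁻¹ := by group
  rw [this, h2]; group

/-! ### Torsion elements -/

lemma mem_Msub {g : GL2Z} (h : g.1 0 0 * g.1 1 1 - g.1 0 1 * g.1 1 0 = 1) : pr g ∈ Msub := by
  refine ⟨g, ?_, rfl⟩
  show g ∈ MonoidHom.ker _
  rw [MonoidHom.mem_ker]
  apply Units.ext
  rw [det_val, h]; rfl

lemma exists_col (x y : ℤ) (h : ¬ (x = 0 ∧ y = 0)) :
    ∃ (A : GL2Z) (d : ℤ), d ≠ 0 ∧ x = d * A.1 0 0 ∧ y = d * A.1 1 0 := by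
  have hd : (Int.gcd x y : ℤ) ≠ 0 := by
    intro h0
    apply h
    exact Int.gcd_eq_zero_iff.1 (by exact_mod_cast h0)
  obtain ⟨p, hp⟩ := Int.gcd_dvd_left x y
  obtain ⟨q, hq⟩ := Int.gcd_dvd_right x y
  have hb := Int.gcd_eq_gcd_ab x y
  set d : ℤ := (Int.gcd x y : ℤ) with hdd
  set u := Int.gcdA x y
  set v := Int.gcdB x y
  have h1 : p * u + q * v = 1 := by
    apply mul_left_cancel₀ hd
    calc d * (p * u + q * v) = (d * p) * u + (d * q) * v := by ring
      _ = x * u + y * v := by rw [← hp, ← hq]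
      _ = d * 1 := by rw [← hb]; ring
  refine ⟨⟨!![p, -v; q, u], !![u, v; -q, p], ?_, ?_⟩, d, hd, ?_, ?_⟩
  · ext i j
    fin_cases i <;> fin_cases j <;> simp [Matrix.mul_apply, Fin.sum_univ_two] <;> linarith
  · ext i j
    fin_cases i <;> fin_cases j <;> simp [Matrix.mul_apply, Fin.sum_univ_two] <;> linarith
  · simpa using hp
  · simpa using hq

lemma conj_ut {g A : GL2Z} (h0 : g.1 0 0 * A.1 0 0 + g.1 0 1 * A.1 1 0 = A.1 0 0)
    (h1 : g.1 1 0 * A.1 0 0 + g.1 1 1 * A.1 1 0 = A.1 1 0) : (A⁻¹ * g * A).1 1 0 = 0 := by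
  have h2 : (A⁻¹ * A).1 1 0 = 0 := by simp
  rw [mul_assoc, ent_mul, ent_mul, ent_mul, h0, h1, ← ent_mul, h2]

lemma one_det {g : GL2Z} (h : pr g = 1) : g.1 0 0 * g.1 1 1 - g.1 0 1 * g.1 1 0 = 1 := by
  rcases (pr_eq_one g).1 h with rfl | rfl
  · simp
  · simp only [ent_neg]; simp

lemma invol_mem {S : Subgroup Mhat} (h : IsNeumann S) {x : Mhat} (hx : x ∈ S)
    (h2 : x ^ 2 = 1) : x ∈ Msub := by
  obtain ⟨g, rfl⟩ := pr_surj x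
  rcases det_pm g with hd | hd
  · exact mem_Msub hd
  exfalso
  have hone : pr g = 1 := by
    rw [← map_pow, pr_eq_one, pow_two] at h2
    have h01 : g.1 0 1 * (g.1 0 0 + g.1 1 1) = 0 := by
      have : (g * g).1 0 1 = 0 := by
        rcases h2 with h2 | h2 <;> rw [h2] <;> simp [ent_neg]
      rw [ent_mul] at this; linarith
    have h10 : g.1 1 0 * (g.1 0 0 + g.1 1 1) = 0 := by
      have : (g * g).1 1 0 = 0 := by
        rcases h2 with h2 | h2 <;> rw [h2] <;> simp [ent_neg]
      rw [ent_mul] at this; linarith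
    have hdiff : (g.1 0 0 - g.1 1 1) * (g.1 0 0 + g.1 1 1) = 0 := by
      have : (g * g).1 0 0 = (g * g).1 1 1 := by
        rcases h2 with h2 | h2 <;> rw [h2] <;> simp [ent_neg]
      rw [ent_mul, ent_mul] at this; linarith
    have htr : g.1 0 0 + g.1 1 1 = 0 := by
      by_contra hne
      have a1 := (mul_eq_zero.1 h01).resolve_right hne
      have a2 := (mul_eq_zero.1 hdiff).resolve_right hne
      rw [a1] at hd
      have : g.1 0 0 = g.1 1 1 := by linarith
      rw [this] at hd
      nlinarith [mul_self_nonneg (g.1 1 1)]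
    have hd' : g.1 1 1 = - g.1 0 0 := by linarith
    rw [hd'] at hd
    by_cases hc : g.1 0 0 + 1 = 0 ∧ g.1 1 0 = 0
    · exact neu_free h hx hc.2
    · obtain ⟨A, d, hd0, e0, e1⟩ := exists_col _ _ hc
      apply neu_free' h hx (A := A)
      apply conj_ut
      · apply mul_left_cancel₀ hd0
        rw [mul_add, mul_left_comm, ← e0, mul_left_comm, ← e1]
        linarith
      · apply mul_left_cancel₀ hd0
        rw [mul_add, mul_left_comm, ← e0, mul_left_comm, ← e1, hd']
        linarith
  have := one_det hone
  omega

lemma ord3_mem {x : Mhat} (h3 : x ^ 3 = 1) : x ∈ Msub := by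
  obtain ⟨g, rfl⟩ := pr_surj x
  apply mem_Msub
  rw [← map_pow] at h3
  have := one_det h3
  rw [← det_val, map_pow] at this
  rw [← det_val]
  rcases det_pm g with hd | hd <;> rw [← det_val] at hd
  · exact hd
  · push_cast at this
    rw [hd] at this
    norm_num at this

/-! ### Positive and negative matrices -/

def PosM (g : GL2Z) : Prop := 0 ≤ g.1 0 0 * g.1 1 0 ∧ 0 ≤ g.1 0 1 * g.1 1 1
def NegM (g : GL2Z) : Prop := g.1 0 0 * g.1 1 0 ≤ 0 ∧ g.1 0 1 * g.1 1 1 ≤ 0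

lemma sign_aux {a b c d : ℤ} (h1 : 0 < a * c) (h2 : b * d < 0)
    (hd : a * d - b * c = 1 ∨ a * d - b * c = -1) : False := by
  rcases pos_and_pos_or_neg_and_neg_of_mul_pos h1 with ⟨ha, hc⟩ | ⟨ha, hc⟩ <;>
  rcases mul_neg_iff.1 h2 with ⟨hb, hd'⟩ | ⟨hb, hd'⟩ <;>
  rcases hd with hd | hd <;>
  nlinarith

lemma pos_or_neg (g : GL2Z) : PosM g ∨ NegM g := by
  unfold PosM NegM
  by_contra hcon
  have hd := det_pm g
  rw [not_or, not_and_or, not_and_or] at hcon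
  push Not at hcon
  obtain ⟨h1 | h1, h2 | h2⟩ := hcon
  · linarith
  · refine sign_aux h2 h1 (by rcases hd with hd | hd; right; linarith; left; linarith)
  · exact sign_aux h2 h1 hd
  · linarith

lemma abs_aux {a b x y : ℤ} (h1 : 0 ≤ a * b) (h2 : x * y ≤ 0) :
    |a * x - b * y| = |a| * |x| + |b| * |y| := by
  rw [← abs_mul, ← abs_mul, sub_eq_add_neg, ← abs_neg (b * y)]
  rw [abs_add_eq_add_abs_iff]
  have : 0 ≤ (a * x) * (-(b * y)) := by nlinarith [mul_nonneg h1 (neg_nonneg.2 h2)]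
  rcases mul_nonneg_iff.1 this with h | h
  · left; exact h
  · right; exact h

def Bdd (N : ℤ) (g : GL2Z) : Prop := ∀ i j, |g.1 i j| ≤ N

lemma abs_unit_mul {D p : ℤ} (h : D = 1 ∨ D = -1) : |D * p| = |p| := by
  rcases h with rfl | rfl <;> simp

lemma bounded {x t : GL2Z} {N : ℤ} (hx : PosM x) (hy : NegM (x * t)) (ht : Bdd N t) :
    Bdd N x := by
  set y := x * t with hyd
  have e00 := ent_mul x t 0 0
  have e01 := ent_mul x t 0 1
  have e10 := ent_mul x t 1 0
  have e11 := ent_mul x t 1 1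
  rw [← hyd] at e00 e01 e10 e11
  have hdx := det_pm x
  have hdy := det_pm y
  obtain ⟨p1, p2⟩ := hx
  obtain ⟨n1, n2⟩ := hy
  have t00 := ht 0 0
  have t01 := ht 0 1
  have t10 := ht 1 0
  have t11 := ht 1 1
  rw [← abs_unit_mul hdx] at t00 t01 t10 t11
  have f00 : (x.1 0 0 * x.1 1 1 - x.1 0 1 * x.1 1 0) * t.1 0 0
      = x.1 1 1 * y.1 0 0 - x.1 0 1 * y.1 1 0 := by rw [e00, e10]; ring
  have f01 : (x.1 0 0 * x.1 1 1 - x.1 0 1 * x.1 1 0) * t.1 0 1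
      = x.1 1 1 * y.1 0 1 - x.1 0 1 * y.1 1 1 := by rw [e01, e11]; ring
  have f10 : (x.1 0 0 * x.1 1 1 - x.1 0 1 * x.1 1 0) * t.1 1 0
      = - (x.1 1 0 * y.1 0 0 - x.1 0 0 * y.1 1 0) := by rw [e00, e10]; ring
  have f11 : (x.1 0 0 * x.1 1 1 - x.1 0 1 * x.1 1 0) * t.1 1 1
      = - (x.1 1 0 * y.1 0 1 - x.1 0 0 * y.1 1 1) := by rw [e01, e11]; ring
  rw [mul_comm] at p1 p2
  rw [f00, abs_aux p2 n1] at t00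
  rw [f01, abs_aux p2 n2] at t01
  rw [f10, abs_neg, abs_aux p1 n1] at t10
  rw [f11, abs_neg, abs_aux p1 n2] at t11
  have r0 : ¬ (y.1 0 0 = 0 ∧ y.1 0 1 = 0) := by
    rintro ⟨h1, h2⟩; rw [h1, h2] at hdy; simp at hdy
  have r1 : ¬ (y.1 1 0 = 0 ∧ y.1 1 1 = 0) := by
    rintro ⟨h1, h2⟩; rw [h1, h2] at hdy; simp at hdy
  have key : ∀ a u v b b' : ℤ, ¬ (u = 0 ∧ v = 0) → |a| * |u| + |b| * |b'| ≤ N →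
      ∀ c c' : ℤ, |a| * |v| + |c| * |c'| ≤ N → |a| ≤ N := by
    intro a u v b b' hne h1 c c' h2
    have q1 : 0 ≤ |b| * |b'| := by positivity
    have q2 : 0 ≤ |c| * |c'| := by positivity
    by_cases hu : u = 0
    · have hv : v ≠ 0 := fun h => hne ⟨hu, h⟩
      have := Int.one_le_abs hv
      nlinarith [abs_nonneg a]
    · have := Int.one_le_abs hu
      nlinarith [abs_nonneg a]
  intro i j
  fin_cases i <;> fin_cases j
  · exact key _ _ _ _ _ r1 (by rw [add_comm] at t10; exact t10) _ _
      (by rw [add_comm] at t11; exact t11)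
  · exact key _ _ _ _ _ r1 (by rw [add_comm] at t00; exact t00) _ _
      (by rw [add_comm] at t01; exact t01)
  · exact key _ _ _ _ _ r0 t10 _ _ t11
  · exact key _ _ _ _ _ r0 t00 _ _ t01

lemma bdd_finite (N : ℤ) : {g : GL2Z | Bdd N g}.Finite := by
  have hf : (Set.Icc ((-N, -N, -N, -N) : ℤ × ℤ × ℤ × ℤ) (N, N, N, N)).Finite := Set.finite_Icc _ _
  refine Set.Finite.of_finite_image (f := fun g : GL2Z => (g.1 0 0, g.1 0 1, g.1 1 0, g.1 1 1))
    (hf.subset ?_) ?_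
  · rintro _ ⟨g, hg, rfl⟩
    have h0 := fun i j => abs_le.1 (hg i j)
    exact ⟨⟨(h0 0 0).1, (h0 0 1).1, (h0 1 0).1, (h0 1 1).1⟩,
      ⟨(h0 0 0).2, (h0 0 1).2, (h0 1 0).2, (h0 1 1).2⟩⟩
  · intro g _ h _ e
    simp only [Prod.mk.injEq] at e
    exact gl_ext e.1 e.2.1 e.2.2.1 e.2.2.2

/-- Bound for all lifts of a finite subset. -/
lemma exists_bound (B : Finset Mhat) : ∃ N : ℤ, ∀ t : GL2Z, pr t ∈ B → Bdd N t := by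
  classical
  induction B using Finset.induction_on with
  | empty => exact ⟨0, by simp⟩
  | insert x B _ ih =>
    obtain ⟨N, hN⟩ := ih
    obtain ⟨g, rfl⟩ := pr_surj x
    refine ⟨max N (|g.1 0 0| + |g.1 0 1| + |g.1 1 0| + |g.1 1 1|), ?_⟩
    intro t ht
    rcases Finset.mem_insert.1 ht with ht | ht
    · have : ∀ i j, |t.1 i j| = |g.1 i j| := by
        intro i j
        rcases (pr_eq _ _).1 ht with rfl | rfl
        · rfl
        · rw [ent_neg, abs_neg]
      intro i j
      rw [this]
      apply le_max_of_le_right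
      have := abs_nonneg (g.1 0 0)
      have := abs_nonneg (g.1 0 1)
      have := abs_nonneg (g.1 1 0)
      have := abs_nonneg (g.1 1 1)
      fin_cases i <;> fin_cases j <;> simp only [Fin.zero_eta, Fin.mk_one] <;> linarith
    · intro i j
      exact le_max_of_le_left (hN t ht i j)

/-- Walking along a word one crosses from positive to negative. -/
lemma crossing {S : Subgroup Mhat} {B : Finset Mhat}
    (hB : Submonoid.closure (B : Set Mhat) = S.toSubmonoid) {N : ℤ} (hN1 : 1 ≤ N)
    (hN : ∀ t : GL2Z, pr t ∈ B → Bdd N t) (w s s' : GL2Z) (hs : pr s ∈ S) (hs' : pr s' ∈ S)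
    (hp : PosM (w * s)) (hn : NegM (w * s')) :
    ∃ r, pr r ∈ S ∧ Bdd N (w * r) := by
  have key : ∀ h ∈ Submonoid.closure (B : Set Mhat), ∀ (u v : GL2Z), pr u ∈ S →
      pr v = h → PosM (w * u) → NegM (w * u * v) → ∃ r, pr r ∈ S ∧ Bdd N (w * r) := by
    intro h hh
    induction hh using Submonoid.closure_induction with
    | mem x hx =>
      intro u v hu hv hp hn
      exact ⟨u, hu, bounded hp hn (hN v (by rw [hv]; exact hx))⟩
    | one =>
      intro u v hu hv hp hn
      refine ⟨u, hu, bounded hp hn ?_⟩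
      have h1 : Bdd N 1 := by
        intro i j
        fin_cases i <;> fin_cases j <;> simp <;> linarith
      rcases (pr_eq_one v).1 hv with rfl | rfl
      · exact h1
      · intro i j
        rw [ent_neg, abs_neg]; exact h1 i j
    | mul x y hx _ ihx ihy =>
      intro u v hu hv hp hn
      obtain ⟨a, rfl⟩ := pr_surj x
      rw [hB] at hx
      have hxS : pr a ∈ S := hx
      rcases pos_or_neg (w * u * a) with h | h
      · refine ihy (u * a) (a⁻¹ * v) ?_ ?_ (by rwa [← mul_assoc]) ?_
        · rw [map_mul]; exact S.mul_mem hu hxS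
        · rw [map_mul, hv, map_inv]; group
        · have : w * (u * a) * (a⁻¹ * v) = w * u * v := by group
          rwa [this]
      · exact ihx u a hu rfl hp h
  refine key (pr (s⁻¹ * s')) ?_ s _ hs rfl hp ?_
  · rw [hB, map_mul, map_inv]
    exact S.mul_mem (S.inv_mem hs) hs'
  · have : w * s * (s⁻¹ * s') = w * s' := by group
    rwa [this]

lemma exists_side {S : Subgroup Mhat} (h : IsNeumann S) {B : Finset Mhat}
    (hB : Submonoid.closure (B : Set Mhat) = S.toSubmonoid) :
    ∃ w : GL2Z, w.1 1 0 = 0 ∧ ∀ s, pr s ∈ S → ¬ PosM (w * s) := by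
  obtain ⟨N, hN⟩ := exists_bound B
  have hN' : ∀ t : GL2Z, pr t ∈ B → Bdd (max N 1) t := fun t ht i j =>
    le_max_of_le_left (hN t ht i j)
  suffices ∃ n : ℕ, (∀ s, pr s ∈ S → ¬ PosM ((tauGL ^ n) * s)) ∨
      (∀ s, pr s ∈ S → ¬ NegM ((tauGL ^ n) * s)) by
    obtain ⟨n, hn | hn⟩ := this
    · exact ⟨_, (tau_pow_ent n).2.2.1, hn⟩
    · refine ⟨nuGL * tauGL ^ n, ut_mul (by simp [nuGL]) (tau_pow_ent n).2.2.1, ?_⟩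
      intro s hs hp
      apply hn s hs
      obtain ⟨h1, h2⟩ := hp
      rw [mul_assoc, ent_mul nuGL, ent_mul nuGL] at h1 h2
      simp [nuGL] at h1 h2
      exact ⟨h1, h2⟩
  by_contra hcon
  push Not at hcon
  have hex : ∀ n : ℕ, ∃ r, pr r ∈ S ∧ Bdd (max N 1) (tauGL ^ n * r) := by
    intro n
    obtain ⟨⟨s, hs, hp⟩, ⟨s', hs', hn⟩⟩ := hcon n
    exact crossing hB (le_max_right _ _) hN' _ s s' hs hs' hp hn
  choose r hr hbd using hex
  obtain ⟨n, -, m, -, hne, heq⟩ := Set.infinite_univ.exists_ne_map_eq_of_mapsTo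
    (f := fun n : ℕ => tauGL ^ n * r n) (t := {g | Bdd (max N 1) g})
    (fun n _ => hbd n) (bdd_finite _)
  have hlt : ∀ a b : ℕ, a < b → tauGL ^ a * r a = tauGL ^ b * r b → False := by
    intro a b hab e
    have e2 : tauGL ^ (b - a) = r a * (r b)⁻¹ := by
      rw [eq_mul_inv_iff_mul_eq]
      apply mul_left_cancel (a := tauGL ^ a)
      rw [← mul_assoc, ← pow_add, e]
      congr 2; omega
    obtain ⟨h1, h2, h3, h4⟩ := tau_pow_ent (b - a)
    have h5 : pr (tauGL ^ (b - a)) = 1 := by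
      apply neu_free h _ h3
      rw [e2, map_mul, map_inv]
      exact S.mul_mem (hr a) (S.inv_mem (hr b))
    rcases (pr_eq_one _).1 h5 with h6 | h6
    · rw [h6] at h2; simp at h2; omega
    · rw [h6, ent_neg] at h2; simp at h2; omega
  rcases lt_or_gt_of_ne hne with h | h
  · exact hlt n m h heq
  · exact hlt m n h heq.symm

/-- Iterating the golden matrix makes a nonzero vector positive. -/
lemma golden (f : ℕ → ℤ) (hf : ∀ n, f (n + 2) = f (n + 1) + f n)
    (hneg : ∀ n, f (n + 1) * f n ≤ 0) : f 0 = 0 := by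
  have key : ∀ M : ℕ, ∀ n, (f (n + 1)).natAbs + (f n).natAbs ≤ M → f n = 0 ∧ f (n + 1) = 0 := by
    intro M
    induction M with
    | zero => intro n h; omega
    | succ M ih =>
      intro n h
      have h0 := hneg n
      have h1 := hneg (n + 1)
      have h2 := hneg (n + 2)
      rw [hf (n + 1)] at h2
      rw [hf n] at h1 h2
      by_cases hx : f (n + 1) = 0
      · rw [hx] at h2
        refine ⟨?_, hx⟩
        nlinarith
      · have : (f (n + 1 + 1)).natAbs + (f (n + 1)).natAbs ≤ M := by
          have e := hf n
          rcases lt_or_gt_of_ne hx with hx | hx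
          · have a1 : 0 ≤ f n := by nlinarith
            have a2 : 0 ≤ f (n + 1) + f n := by nlinarith
            rw [show n + 1 + 1 = n + 2 from rfl, e]
            omega
          · have a1 : f n ≤ 0 := by nlinarith
            have a2 : f (n + 1) + f n ≤ 0 := by nlinarith
            rw [show n + 1 + 1 = n + 2 from rfl, e]
            omega
        have := (ih (n + 1) this).1
        exact absurd this hx
  exact (key _ 0 le_rfl).1

lemma col_pos {a b c d x y : ℤ} (h : (0 ≤ a ∧ 0 ≤ c ∧ b ≤ 0 ∧ d ≤ 0) ∨
    (a ≤ 0 ∧ c ≤ 0 ∧ 0 ≤ b ∧ 0 ≤ d)) (hxy : x * y ≤ 0) :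
    0 ≤ (a * x + b * y) * (c * x + d * y) := by
  have h1 : 0 ≤ a * c := by rcases h with h | h <;> nlinarith
  have h2 : 0 ≤ b * d := by rcases h with h | h <;> nlinarith
  have h3 : a * d ≤ 0 := by rcases h with h | h <;> nlinarith
  have h4 : b * c ≤ 0 := by rcases h with h | h <;> nlinarith
  have e : (a * x + b * y) * (c * x + d * y) =
    (a * c) * (x * x) + (b * d) * (y * y) + (a * d + b * c) * (x * y) := by ring
  rw [e]
  have := mul_nonneg h1 (mul_self_nonneg x)
  have := mul_nonneg h2 (mul_self_nonneg y)
  have := mul_nonneg_of_nonpos_of_nonpos (add_nonpos h3 h4) hxy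
  linarith

def g1GL : GL2Z := ⟨!![1,0;1,1], !![1,0;-1,1], by decide, by decide⟩
def g2GL : GL2Z := ⟨!![2,1;1,1], !![1,-1;-1,2], by decide, by decide⟩

lemma not_fg {S : Subgroup Mhat} (h : IsNeumann S) {B : Finset Mhat}
    (hB : Submonoid.closure (B : Set Mhat) = S.toSubmonoid) : False := by
  obtain ⟨w, hw, hS⟩ := exists_side h hB
  -- the element taking `1` to `2`
  have hex : ∃ q : GL2Z, pr (w⁻¹ * q * w) ∈ S ∧ q.1 0 1 = 2 - q.1 0 0 ∧ q.1 1 1 = 1 - q.1 1 0 ∧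
      (q.1 0 0 = 2 * q.1 1 0 + 1 ∨ q.1 0 0 = 2 * q.1 1 0 - 1) := by
    obtain ⟨s1, t1, hs1, ht1, e1⟩ := neu_trans h (w⁻¹ * g1GL)
    obtain ⟨s2, t2, hs2, ht2, e2⟩ := neu_trans h (w⁻¹ * g2GL)
    have hu : (t2⁻¹ * t1).1 1 0 = 0 := ut_mul (ut_inv ht2) ht1
    have hS' : pr (w⁻¹ * (g2GL * (t2⁻¹ * t1) * g1GL⁻¹) * w) ∈ S := by
      have : w⁻¹ * (g2GL * (t2⁻¹ * t1) * g1GL⁻¹) * w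
          = (w⁻¹ * g2GL) * t2⁻¹ * t1 * (w⁻¹ * g1GL)⁻¹ := by group
      rw [this, e1, e2]
      have : s2 * t2 * t2⁻¹ * t1 * (s1 * t1)⁻¹ = s2 * s1⁻¹ := by group
      rw [this, map_mul, map_inv]
      exact S.mul_mem hs2 (S.inv_mem hs1)
    have gen : ∀ t : GL2Z, t.1 1 0 = 0 → t.1 0 0 = 1 →
        pr (w⁻¹ * (g2GL * t * g1GL⁻¹) * w) ∈ S →
        ∃ q : GL2Z, pr (w⁻¹ * q * w) ∈ S ∧ q.1 0 1 = 2 - q.1 0 0 ∧ q.1 1 1 = 1 - q.1 1 0 ∧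
      (q.1 0 0 = 2 * q.1 1 0 + 1 ∨ q.1 0 0 = 2 * q.1 1 0 - 1) := by
      intro t h10 h00 ht
      have i1 : g1GL⁻¹.1 = !![1,0;-1,1] := rfl
      have i2 : g2GL.1 = !![2,1;1,1] := rfl
      refine ⟨_, ht, ?_, ?_, ?_⟩
      · simp only [ent_mul, i1, i2, h10, h00]; simp
      · simp only [ent_mul, i1, i2, h10, h00]; simp
      · simp only [ent_mul, i1, i2, h10, h00]
        rcases (ut_diag h10).2 with h11 | h11 <;> rw [h11] <;> simp
        · left; ring
        · right; ring
    rcases (ut_diag hu).1 with h00 | h00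
    · exact gen _ hu h00 hS'
    · refine gen (-(t2⁻¹ * t1)) (by rw [ent_neg, hu]; rfl) (by rw [ent_neg, h00]; rfl) ?_
      have : w⁻¹ * (g2GL * -(t2⁻¹ * t1) * g1GL⁻¹) * w
        = -(w⁻¹ * (g2GL * (t2⁻¹ * t1) * g1GL⁻¹) * w) := by
        simp only [mul_neg, neg_mul]
      rw [this, pr_neg]
      exact hS'
  obtain ⟨q, hq, hb, hd, ha⟩ := hex
  have hneg : ∀ s, pr s ∈ S → NegM (w * s) := fun s hs =>
    (pos_or_neg _).resolve_left (hS s hs)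
  have hc : q.1 1 0 ≠ 0 := by
    intro h0
    have h1 : pr (w⁻¹ * q * w) = 1 :=
      neu_free h hq (ut_mul (ut_mul (ut_inv hw) h0) hw)
    have h2 : pr q = 1 := by
      rw [map_mul, map_mul, map_inv] at h1
      have : pr q = pr w * ((pr w)⁻¹ * pr q * pr w) * (pr w)⁻¹ := by group
      rw [this, h1]; group
    rcases (pr_eq_one q).1 h2 with rfl | rfl
    · simp at hb
    · simp [ent_neg] at hd
  by_cases hgold : q.1 0 0 = 1 ∧ q.1 1 0 = 1
  · -- golden case
    obtain ⟨ga, gc⟩ := hgold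
    rw [ga] at hb
    rw [gc] at hd
    have hpow : ∀ n : ℕ, NegM (q ^ n * w) := by
      intro n
      have h1 : pr (w⁻¹ * q ^ n * w) ∈ S := by
        have : w⁻¹ * q ^ n * w = (w⁻¹ * q * w) ^ n := by
          have := conj_pow (i := n) (a := w⁻¹) (b := q)
          rw [inv_inv] at this
          exact this.symm
        rw [this, map_pow]
        exact S.pow_mem hq n
      have := hneg _ h1
      have e : w * (w⁻¹ * q ^ n * w) = q ^ n * w := by group
      rwa [e] at this
    have hrec : ∀ n : ℕ, (q ^ (n + 1) * w).1 0 0 = (q ^ n * w).1 0 0 + (q ^ n * w).1 1 0 ∧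
        (q ^ (n + 1) * w).1 1 0 = (q ^ n * w).1 0 0 := by
      intro n
      rw [pow_succ', mul_assoc, ent_mul q, ent_mul q, ga, gc, hb, hd]
      constructor <;> ring
    have hz := golden (fun n => (q ^ n * w).1 1 0) ?_ ?_
    have hz1 := golden (fun n => (q ^ (n + 1) * w).1 1 0) ?_ ?_
    · change (q ^ 0 * w).1 1 0 = 0 at hz
      change (q ^ (0 + 1) * w).1 1 0 = 0 at hz1
      rw [(hrec 0).2] at hz1
      rcases det_pm (q ^ 0 * w) with hd' | hd' <;> rw [hz, hz1] at hd' <;> simp at hd'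
    · intro n
      change (q ^ (n + 2 + 1) * w).1 1 0 = (q ^ (n + 1 + 1) * w).1 1 0 + (q ^ (n + 1) * w).1 1 0
      rw [(hrec (n + 2)).2, (hrec (n + 1)).1, (hrec (n + 1)).2]
    · intro n
      change (q ^ (n + 1 + 1) * w).1 1 0 * (q ^ (n + 1) * w).1 1 0 ≤ 0
      rw [(hrec (n + 1)).2]
      exact (hpow _).1
    · intro n
      change (q ^ (n + 1 + 1) * w).1 1 0 = (q ^ (n + 1) * w).1 1 0 + (q ^ n * w).1 1 0
      rw [(hrec (n + 1)).2, (hrec n).1, (hrec n).2]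
    · intro n
      change (q ^ (n + 1) * w).1 1 0 * (q ^ n * w).1 1 0 ≤ 0
      rw [(hrec n).2]
      exact (hpow _).1
  · have hsign : (0 ≤ q.1 0 0 ∧ 0 ≤ q.1 1 0 ∧ q.1 0 1 ≤ 0 ∧ q.1 1 1 ≤ 0) ∨
        (q.1 0 0 ≤ 0 ∧ q.1 1 0 ≤ 0 ∧ 0 ≤ q.1 0 1 ∧ 0 ≤ q.1 1 1) := by omega
    have hw1 : NegM w := by
      have := hneg 1 (by rw [map_one]; exact S.one_mem)
      rwa [mul_one] at this
    apply hS _ hq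
    have e : w * (w⁻¹ * q * w) = q * w := by group
    rw [e]
    constructor
    · rw [ent_mul, ent_mul]; exact col_pos hsign hw1.1
    · rw [ent_mul, ent_mul]; exact col_pos hsign hw1.2

/-! ### Free products -/

lemma coprod_fg {ι : Type} [Finite ι] (H : ι → Type) [∀ i, Group (H i)]
    (hc : ∀ i, Group.FG (H i)) : Group.FG (Monoid.CoprodI H) := by
  classical
  rw [Group.fg_iff]
  choose s hs hf using fun i => Group.fg_iff.1 (hc i)
  refine ⟨⋃ i, (Monoid.CoprodI.of (M := H) (i := i)) '' (s i), ?_,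
    Set.finite_iUnion fun i => (hf i).image _⟩
  rw [eq_top_iff]
  rintro x -
  induction x using Monoid.CoprodI.induction_on with
  | one => exact Subgroup.one_mem _
  | mul x y hx hy => exact Subgroup.mul_mem _ hx hy
  | of i m =>
    have : Subgroup.map (Monoid.CoprodI.of (M := H) (i := i)) (Subgroup.closure (s i)) ≤
        Subgroup.closure (⋃ i, (Monoid.CoprodI.of (M := H) (i := i)) '' (s i)) := by
      rw [MonoidHom.map_closure]
      exact Subgroup.closure_mono (Set.subset_iUnion (fun i =>
        (Monoid.CoprodI.of (M := H) (i := i)) '' (s i)) i)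
    apply this
    rw [hs i]
    exact ⟨m, trivial, rfl⟩

lemma fg_of_equiv {G K : Type} [Group G] [Group K] (e : G ≃* K) [Group.FG K] : Group.FG G :=
  Group.fg_of_surjective (f := e.symm.toMonoidHom) e.symm.surjective


/-- If Ŝ is a Neumann subgroup of M̂ = PGL(2,ℤ) not contained
in M = PSL(2,ℤ) and Ŝ has (k,l,m)-structure, then k + l + m = ∞ and m ≥ 1. -/
theorem neumann_klm_structure_constraints
    (Shat : Subgroup Mhat) (h1 : IsNeumann Shat) (h2 : ¬ Shat ≤ Msub)
    (k l m : ℕ∞) (h3 : HasKLMStructure Shat k l m) :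
    k + l + m = ⊤ ∧ 1 ≤ m := by
  obtain ⟨ι, H, inst, ⟨e⟩, hall, hk, hl, hm⟩ := h3
  letI := inst
  constructor
  · by_contra hfin
    rw [ENat.add_eq_top, ENat.add_eq_top, not_or, not_or] at hfin
    obtain ⟨⟨fk, fl⟩, fm⟩ := hfin
    rw [← hk] at fk
    rw [← hl] at fl
    rw [← hm] at fm
    have f1 := Set.encard_ne_top_iff.1 fk
    have f2 := Set.encard_ne_top_iff.1 fl
    have f3 := Set.encard_ne_top_iff.1 fm
    have : Finite ι := by
      rw [← Set.finite_univ_iff]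
      refine ((f1.union f2).union f3).subset ?_
      intro i _
      rcases hall i with h | h | h
      · exact Or.inl (Or.inl h)
      · exact Or.inl (Or.inr h)
      · exact Or.inr h
    have hc : ∀ i, Group.FG (H i) := by
      intro i
      rcases hall i with f | f | f
      · obtain ⟨f⟩ := f; exact fg_of_equiv f
      · obtain ⟨f⟩ := f; exact fg_of_equiv f
      · obtain ⟨f⟩ := f; exact fg_of_equiv f
    have := coprod_fg H hc
    have hS : Group.FG Shat := fg_of_equiv e
    rw [Group.fg_iff_subgroup_fg, Subgroup.fg_iff_submonoid_fg] at hS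
    obtain ⟨B, hB⟩ := hS
    exact not_fg h1 hB
  · by_contra hm0
    have hm0' : m = 0 := by
      rwa [not_le, Order.lt_one_iff] at hm0
    rw [hm0', Set.encard_eq_zero] at hm
    apply h2
    have key : ∀ x : Monoid.CoprodI H, ((e.symm x : Shat) : Mhat) ∈ Msub := by
      intro x
      induction x using Monoid.CoprodI.induction_on with
      | one => simp [Msub.one_mem]
      | mul x y hx hy =>
        rw [map_mul, Subgroup.coe_mul]
        exact Msub.mul_mem hx hy
      | of i g =>
        rcases hall i with f | f | h
        · apply invol_mem h1 (Subtype.property _)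
          have : g ^ 2 = 1 := by
            obtain ⟨f⟩ := f
            apply f.injective
            rw [map_pow, map_one]
            generalize f g = y
            revert y; decide
          rw [← Subgroup.coe_pow, ← map_pow, ← map_pow, this, map_one, map_one]
          rfl
        · apply ord3_mem
          have : g ^ 3 = 1 := by
            obtain ⟨f⟩ := f
            apply f.injective
            rw [map_pow, map_one]
            generalize f g = y
            revert y; decide
          rw [← Subgroup.coe_pow, ← map_pow, ← map_pow, this, map_one, map_one]
          rfl
        · have : i ∈ {i | Nonempty (H i ≃* Multiplicative ℤ)} := h
          rw [hm] at this
          exact this.elim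
    intro x hx
    have := key (e ⟨x, hx⟩)
    simpa using this
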